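/- Let m be a finitely additive measure on L(H) with values in [0,∞] and suppose m has the L-S property: there is a two-dimensional subspace Q with m(Q) < ∞. Then D(m) := {x ∈ H \ {0} : m(span{x}) < ∞} ∪ {0} is a linear subspace of H. -/

import Mathlib

open scoped InnerProductSpace ENNReal

/-!
The vectors of finite measure form a set `D` closed under scaling and under sums of orthogonal
vectors, so the claim is about such sets alone.

The heart is the following: if `a`, `b`, `c` are pairwise orthogonal, `c ≠ 0`, and `D` contains
`c`, `b + a` and `b - a`, then it contains `a`. Indeed `b - a + s c` and `b + a + t c` lie in `D`,
and so do their linear combinations as soon as `s t ‖c‖² = ‖a‖² - ‖b‖²`. If `‖b‖² ≤ 2‖a‖²`, a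
suitable choice yields `a + c` and `a - c` with `‖c‖ = ‖a‖`, which are orthogonal with sum `2a`.
Otherwise another choice yields `b`, `c + a` and `c - a` with `‖c‖² = ‖b‖² - ‖a‖²`: the situation
is the same with `b` and `c` exchanged, and `‖b‖²` has dropped by `‖a‖²`.

Consequently `u + v ∈ D` for all `u, v ∈ D` that are orthogonal to a common nonzero `c ∈ D`:
rescale `v` so that `a = u - v` and `b = u + v` become orthogonal. If `D` contains a plane `Q`, then
a suitable `c ∈ Q` shows first that `D` contains the component orthogonal to `Q` of each of its
vectors, and then that it is closed under addition.
-/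

section OrthoClosed

variable {𝕜 E : Type*} [RCLike 𝕜] [NormedAddCommGroup E] [InnerProductSpace 𝕜 E]

variable (𝕜) in
/-- A set of vectors is *ortho-closed* if it is stable under scalar multiplication and under sums of
orthogonal vectors. The domain `D(m)` of a finitely additive measure on subspaces is the motivating
example. The empty set is allowed. -/
structure IsOrthoClosed (D : Set E) : Prop where
  smul_mem : ∀ (k : 𝕜) {x : E}, x ∈ D → k • x ∈ D
  add_mem_of_inner_eq_zero : ∀ {x y : E}, x ∈ D → y ∈ D → ⟪x, y⟫_𝕜 = 0 → x + y ∈ D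

theorem inner_add_sub_eq_zero_of_norm_eq {u v : E} (hnorm : ‖u‖ = ‖v‖)
    (hsymm : ⟪u, v⟫_𝕜 = ⟪v, u⟫_𝕜) : ⟪u + v, u - v⟫_𝕜 = 0 := by
  simp only [inner_add_left, inner_sub_right, inner_self_eq_norm_sq_to_K, hnorm, hsymm]
  ring

theorem exists_smul_norm_eq_and_inner_symm {u v : E} (hu : u ≠ 0) (hv : v ≠ 0) :
    ∃ k : 𝕜, k ≠ 0 ∧ ‖u‖ = ‖k • v‖ ∧ ⟪u, k • v⟫_𝕜 = ⟪k • v, u⟫_𝕜 := by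
  obtain ⟨ω, hω, hωuv⟩ := RCLike.exists_norm_eq_mul_self ⟪u, v⟫_𝕜
  have hv' : ‖v‖ ≠ 0 := norm_ne_zero_iff.2 hv
  have hω0 : ω ≠ 0 := norm_ne_zero_iff.1 (by simp [hω])
  refine ⟨((‖u‖ / ‖v‖ : ℝ) : 𝕜) * ω, by simp [hu, hv, hω0], ?_, ?_⟩
  · simp [norm_smul, hω, hv']
  · rw [← inner_conj_symm (_ • v) u, inner_smul_right, mul_assoc, ← hωuv, map_mul,
      RCLike.conj_ofReal, RCLike.conj_ofReal]

theorem inner_sub_add_smul_add_add_smul {a b c : E} (hab : ⟪a, b⟫_𝕜 = 0) (hac : ⟪a, c⟫_𝕜 = 0)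
    (hbc : ⟪b, c⟫_𝕜 = 0) (s t : ℝ) :
    ⟪b - a + (s : 𝕜) • c, b + a + (t : 𝕜) • c⟫_𝕜 =
      ((‖b‖ ^ 2 - ‖a‖ ^ 2 + s * t * ‖c‖ ^ 2 : ℝ) : 𝕜) := by
  simp only [inner_add_left, inner_sub_left, inner_add_right, inner_smul_left, inner_smul_right,
    inner_self_eq_norm_sq_to_K, RCLike.conj_ofReal, hab, hac, hbc, inner_eq_zero_symm.1 hab,
    inner_eq_zero_symm.1 hac, inner_eq_zero_symm.1 hbc]
  push_cast
  ring

theorem exists_mem_ne_zero_inner_eq_zero {Q : Submodule 𝕜 E} (hQ : 1 < Module.finrank 𝕜 Q)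
    (x : E) : ∃ c ∈ Q, c ≠ 0 ∧ ⟪x, c⟫_𝕜 = 0 := by
  have : FiniteDimensional 𝕜 Q := Module.finite_of_finrank_pos (by lia)
  have hker : ((innerₛₗ 𝕜 x).domRestrict Q).ker ≠ ⊥ :=
    LinearMap.ker_ne_bot_of_finrank_lt (by rwa [Module.finrank_self])
  obtain ⟨c, hxc, hc⟩ := Submodule.exists_mem_ne_zero_of_ne_bot hker
  exact ⟨c, c.2, by simpa using hc, by simpa using hxc⟩

namespace IsOrthoClosed

variable {D : Set E} (hD : IsOrthoClosed 𝕜 D)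
include hD

theorem smul_add_smul_mem {u v : E} (hu : u ∈ D) (hv : v ∈ D) (huv : ⟪u, v⟫_𝕜 = 0) (k l : 𝕜) :
    k • u + l • v ∈ D :=
  hD.add_mem_of_inner_eq_zero (hD.smul_mem k hu) (hD.smul_mem l hv) <| by
    simp [inner_smul_left, inner_smul_right, huv]

section OrthogonalTriple

variable {a b c : E} (hab : ⟪a, b⟫_𝕜 = 0) (hac : ⟪a, c⟫_𝕜 = 0) (hbc : ⟪b, c⟫_𝕜 = 0)
  (hc : c ∈ D) (hadd : b + a ∈ D) (hsub : b - a ∈ D)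
include hab hac hbc hc hadd hsub

theorem smul_sub_add_smul_add_mem {s t : ℝ} (hst : s * t * ‖c‖ ^ 2 = ‖a‖ ^ 2 - ‖b‖ ^ 2)
    (k l : 𝕜) : k • (b - a + (s : 𝕜) • c) + l • (b + a + (t : 𝕜) • c) ∈ D := by
  refine hD.smul_add_smul_mem ?_ ?_ ?_ k l
  · exact hD.add_mem_of_inner_eq_zero hsub (hD.smul_mem _ hc) <| by
      simp [inner_sub_left, inner_smul_right, hac, hbc]
  · exact hD.add_mem_of_inner_eq_zero hadd (hD.smul_mem _ hc) <| by
      simp [inner_add_left, inner_smul_right, hac, hbc]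
  · rw [inner_sub_add_smul_add_add_smul hab hac hbc, hst]
    simp

theorem mem_of_norm_sq_eq_add (hnorm : ‖b‖ ^ 2 = ‖a‖ ^ 2 + ‖c‖ ^ 2) : b ∈ D := by
  convert hD.smul_sub_add_smul_add_mem hab hac hbc hc hadd hsub (s := 1) (t := -1)
    (by linarith) (1 / 2) (1 / 2) using 1
  push_cast
  module

theorem sub_mem_of_norm_sq_eq_add (hnorm : ‖b‖ ^ 2 = ‖a‖ ^ 2 + ‖c‖ ^ 2) : c - a ∈ D := by
  convert hD.smul_sub_add_smul_add_mem hab hac hbc hc hadd hsub (s := 1) (t := -1)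
    (by linarith) (1 / 2) (-1 / 2) using 1
  push_cast
  module

theorem add_mem_of_norm_sq_eq_add (hnorm : ‖b‖ ^ 2 = ‖a‖ ^ 2 + ‖c‖ ^ 2) : c + a ∈ D := by
  simpa using hD.sub_mem_of_norm_sq_eq_add (a := -a) (by simpa using hab) (by simpa using hac) hbc
    hc (by simpa [← sub_eq_add_neg] using hsub) (by simpa using hadd) (by simpa using hnorm)

theorem add_mem_of_norm_sq_le_two_mul (hca : ‖c‖ = ‖a‖) (hba : ‖b‖ ^ 2 ≤ 2 * ‖a‖ ^ 2) :
    a + c ∈ D := by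
  obtain rfl | ha := eq_or_ne a 0
  · simpa using hc
  have ha' : 0 < ‖a‖ ^ 2 := by positivity
  obtain ⟨r, hr⟩ : ∃ r : ℝ, r ^ 2 = 2 - ‖b‖ ^ 2 / ‖a‖ ^ 2 :=
    ⟨√_, Real.sq_sqrt (sub_nonneg.2 ((div_le_iff₀ ha').2 hba))⟩
  have hst : (r - 1) * (r + 1) * ‖c‖ ^ 2 = ‖a‖ ^ 2 - ‖b‖ ^ 2 := by
    rw [hca]
    field_simp at hr
    linear_combination hr
  convert hD.smul_sub_add_smul_add_mem hab hac hbc hc hadd hsub hst (-1 / 2) (1 / 2) using 1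
  push_cast
  module

theorem mem_of_norm_sq_le_two_mul (hc0 : c ≠ 0) (hba : ‖b‖ ^ 2 ≤ 2 * ‖a‖ ^ 2) : a ∈ D := by
  obtain ⟨k, hk⟩ : ∃ k : 𝕜, ‖k • c‖ = ‖a‖ := ⟨_, norm_smul_inv_norm' (norm_nonneg a) hc0⟩
  have add_smul_mem (l : 𝕜) (hl : ‖l • c‖ = ‖a‖) : a + l • c ∈ D :=
    hD.add_mem_of_norm_sq_le_two_mul hab (by rw [inner_smul_right, hac, mul_zero])
      (by rw [inner_smul_right, hbc, mul_zero]) (hD.smul_mem l hc) hadd hsub hl hba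
  have hplus : a + k • c ∈ D := add_smul_mem k hk
  have hminus : a - k • c ∈ D := by
    simpa [← sub_eq_add_neg] using add_smul_mem (-k) (by rwa [neg_smul, norm_neg])
  have horth : ⟪a + k • c, a - k • c⟫_𝕜 = 0 :=
    inner_add_sub_eq_zero_of_norm_eq hk.symm <| by
      rw [inner_smul_right, inner_smul_left, hac, inner_eq_zero_symm.1 hac, mul_zero, mul_zero]
  convert hD.smul_add_smul_mem hplus hminus horth (1 / 2) (1 / 2) using 1
  module

end OrthogonalTriple

theorem mem_of_norm_sq_le_nat_add_two_mul (n : ℕ) {a b c : E} (hab : ⟪a, b⟫_𝕜 = 0)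
    (hac : ⟪a, c⟫_𝕜 = 0) (hbc : ⟪b, c⟫_𝕜 = 0) (hc : c ∈ D) (hadd : b + a ∈ D) (hsub : b - a ∈ D)
    (hc0 : c ≠ 0) (hn : ‖b‖ ^ 2 ≤ (n + 2) * ‖a‖ ^ 2) : a ∈ D := by
  induction n generalizing b c with
  | zero => exact hD.mem_of_norm_sq_le_two_mul hab hac hbc hc hadd hsub hc0 (by simpa using hn)
  | succ n ih =>
    obtain hba | hba := le_or_gt (‖b‖ ^ 2) (2 * ‖a‖ ^ 2)
    · exact hD.mem_of_norm_sq_le_two_mul hab hac hbc hc hadd hsub hc0 hba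
    have hdiff : 0 ≤ ‖b‖ ^ 2 - ‖a‖ ^ 2 := by linarith [sq_nonneg ‖a‖]
    have hb0 : b ≠ 0 := by
      rintro rfl
      simp only [norm_zero] at hba
      linarith [sq_nonneg ‖a‖]
    obtain ⟨k, hk⟩ : ∃ k : 𝕜, ‖k • c‖ = √(‖b‖ ^ 2 - ‖a‖ ^ 2) :=
      ⟨_, norm_smul_inv_norm' (Real.sqrt_nonneg _) hc0⟩
    have hnorm : ‖b‖ ^ 2 = ‖a‖ ^ 2 + ‖k • c‖ ^ 2 := by rw [hk, Real.sq_sqrt hdiff]; ring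
    have hac' : ⟪a, k • c⟫_𝕜 = 0 := by rw [inner_smul_right, hac, mul_zero]
    have hbc' : ⟪b, k • c⟫_𝕜 = 0 := by rw [inner_smul_right, hbc, mul_zero]
    have hkc : k • c ∈ D := hD.smul_mem k hc
    refine ih hac' hab (inner_eq_zero_symm.1 hbc')
      (hD.mem_of_norm_sq_eq_add hab hac' hbc' hkc hadd hsub hnorm)
      (hD.add_mem_of_norm_sq_eq_add hab hac' hbc' hkc hadd hsub hnorm)
      (hD.sub_mem_of_norm_sq_eq_add hab hac' hbc' hkc hadd hsub hnorm) hb0 ?_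
    push_cast at hn
    linarith

theorem mem_of_add_mem_of_sub_mem {a b c : E} (hab : ⟪a, b⟫_𝕜 = 0) (hac : ⟪a, c⟫_𝕜 = 0)
    (hbc : ⟪b, c⟫_𝕜 = 0) (hc : c ∈ D) (hadd : b + a ∈ D) (hsub : b - a ∈ D) (hc0 : c ≠ 0) :
    a ∈ D := by
  obtain rfl | ha := eq_or_ne a 0
  · simpa using hD.smul_mem 0 hc
  obtain ⟨n, hn⟩ := exists_nat_ge (‖b‖ ^ 2 / ‖a‖ ^ 2)
  refine hD.mem_of_norm_sq_le_nat_add_two_mul n hab hac hbc hc hadd hsub hc0 ?_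
  rw [div_le_iff₀ (by positivity)] at hn
  linarith [sq_nonneg ‖a‖]

theorem add_mem_of_common_orthogonal {u v c : E} (hu : u ∈ D) (hv : v ∈ D) (hc : c ∈ D)
    (hc0 : c ≠ 0) (huc : ⟪u, c⟫_𝕜 = 0) (hvc : ⟪v, c⟫_𝕜 = 0) : u + v ∈ D := by
  obtain rfl | hu0 := eq_or_ne u 0
  · rwa [zero_add]
  obtain rfl | hv0 := eq_or_ne v 0
  · rwa [add_zero]
  obtain ⟨k, hk0, hnorm, hsymm⟩ := exists_smul_norm_eq_and_inner_symm (𝕜 := 𝕜) hu0 hv0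
  have hab : ⟪u + k • v, u - k • v⟫_𝕜 = 0 := inner_add_sub_eq_zero_of_norm_eq hnorm hsymm
  have hac : ⟪u + k • v, c⟫_𝕜 = 0 := by
    rw [inner_add_left, inner_smul_left, huc, hvc, mul_zero, add_zero]
  have hbc : ⟪u - k • v, c⟫_𝕜 = 0 := by
    rw [inner_sub_left, inner_smul_left, huc, hvc, mul_zero, sub_zero]
  have ha : u + k • v ∈ D := by
    refine hD.mem_of_add_mem_of_sub_mem hab hac hbc hc ?_ ?_ hc0
    · convert hD.smul_mem 2 hu using 1; module
    · convert hD.smul_mem (-2 * k) hv using 1; module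
  have hb : u - k • v ∈ D := by
    refine hD.mem_of_add_mem_of_sub_mem (inner_eq_zero_symm.1 hab) hbc hac hc ?_ ?_ hc0
    · convert hD.smul_mem 2 hu using 1; module
    · convert hD.smul_mem (2 * k) hv using 1; module
  convert hD.smul_add_smul_mem ha hb hab ((1 + k⁻¹) / 2) ((1 - k⁻¹) / 2) using 1
  match_scalars <;> field_simp <;> ring

section ContainsPlane

variable {Q : Submodule 𝕜 E} (hQ : 1 < Module.finrank 𝕜 Q) (hQD : (Q : Set E) ⊆ D)
include hQ hQD

theorem sub_mem_of_mem_orthogonal {x p : E} (hx : x ∈ D) (hp : p ∈ Q) (hxp : x - p ∈ Qᗮ) :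
    x - p ∈ D := by
  obtain ⟨c, hc, hc0, hxc⟩ := exists_mem_ne_zero_inner_eq_zero hQ x
  have hpc : ⟪-p, c⟫_𝕜 = 0 := by
    simpa [inner_sub_left, hxc] using Q.inner_left_of_mem_orthogonal hc hxp
  simpa [← sub_eq_add_neg] using hD.add_mem_of_common_orthogonal hx (hQD (Q.neg_mem hp))
    (hQD hc) hc0 hxc hpc

theorem add_mem {x y : E} (hx : x ∈ D) (hy : y ∈ D) : x + y ∈ D := by
  have : FiniteDimensional 𝕜 Q := Module.finite_of_finrank_pos (by lia)
  obtain ⟨c, hc, hc0, -⟩ := exists_mem_ne_zero_inner_eq_zero hQ (0 : E)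
  let p : E := Q.starProjection x
  let q : E := Q.starProjection y
  have hp : p ∈ Q := Q.starProjection_apply_mem x
  have hq : q ∈ Q := Q.starProjection_apply_mem y
  have hxp : x - p ∈ Qᗮ := Q.sub_starProjection_mem_orthogonal x
  have hyq : y - q ∈ Qᗮ := Q.sub_starProjection_mem_orthogonal y
  have hperp : (x - p) + (y - q) ∈ D :=
    hD.add_mem_of_common_orthogonal (hD.sub_mem_of_mem_orthogonal hQ hQD hx hp hxp)
      (hD.sub_mem_of_mem_orthogonal hQ hQD hy hq hyq) (hQD hc) hc0
      (Q.inner_left_of_mem_orthogonal hc hxp) (Q.inner_left_of_mem_orthogonal hc hyq)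
  have hsum : (p + q) + ((x - p) + (y - q)) ∈ D :=
    hD.add_mem_of_inner_eq_zero (hQD (Q.add_mem hp hq)) hperp
      (Q.inner_right_of_mem_orthogonal (Q.add_mem hp hq) (Qᗮ.add_mem hxp hyq))
  convert hsum using 1
  abel

theorem exists_submodule_coe_eq : ∃ S : Submodule 𝕜 E, (S : Set E) = D :=
  ⟨{ carrier := D
     add_mem' := hD.add_mem hQ hQD
     zero_mem' := hQD Q.zero_mem
     smul_mem' := fun k _ hx => hD.smul_mem k hx }, rfl⟩

end ContainsPlane

end IsOrthoClosed

end OrthoClosed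

section Measure

variable {𝕜 E : Type*} [RCLike 𝕜] [NormedAddCommGroup E] [InnerProductSpace 𝕜 E]

/-- Finite additivity of a `[0, ∞]`-valued function on subspaces, required only of orthogonal pairs
of finite-dimensional subspaces, which are automatically closed. -/
def IsOrthoAdditive (m : Submodule 𝕜 E → ℝ≥0∞) : Prop :=
  ∀ M N : Submodule 𝕜 E, FiniteDimensional 𝕜 M → FiniteDimensional 𝕜 N → M ⟂ N →
    m (M ⊔ N) = m M + m N

namespace IsOrthoAdditive

variable {m : Submodule 𝕜 E → ℝ≥0∞} (hm : IsOrthoAdditive m)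
include hm

theorem mono {M N : Submodule 𝕜 E} [FiniteDimensional 𝕜 N] (hMN : M ≤ N) : m M ≤ m N := by
  have : FiniteDimensional 𝕜 M := Submodule.finiteDimensional_of_le hMN
  have horth : M ⟂ Mᗮ ⊓ N := M.isOrtho_orthogonal_right.mono_right inf_le_left
  calc m M ≤ m M + m (Mᗮ ⊓ N) := le_self_add
    _ = m (M ⊔ Mᗮ ⊓ N) := (hm _ _ this (Submodule.finiteDimensional_of_le inf_le_right) horth).symm
    _ = m N := by rw [Submodule.sup_orthogonal_inf_of_hasOrthogonalProjection hMN]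

theorem isOrthoClosed_setOf_lt_top : IsOrthoClosed 𝕜 {x : E | m (𝕜 ∙ x) < ∞} where
  smul_mem k x hx := (hm.mono (Submodule.span_singleton_smul_le 𝕜 k x)).trans_lt hx
  add_mem_of_inner_eq_zero {x y} hx hy hxy := by
    have horth : (𝕜 ∙ x) ⟂ (𝕜 ∙ y) := Submodule.isOrtho_span.2 <| by simpa using hxy
    have hle : (𝕜 ∙ (x + y)) ≤ (𝕜 ∙ x) ⊔ (𝕜 ∙ y) :=
      (Submodule.span_singleton_le_iff_mem _ _).2 <| Submodule.add_mem_sup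
        (Submodule.mem_span_singleton_self x) (Submodule.mem_span_singleton_self y)
    calc m (𝕜 ∙ (x + y)) ≤ m ((𝕜 ∙ x) ⊔ (𝕜 ∙ y)) := hm.mono hle
      _ = m (𝕜 ∙ x) + m (𝕜 ∙ y) := hm _ _ inferInstance inferInstance horth
      _ < ∞ := ENNReal.add_lt_top.2 ⟨hx, hy⟩

end IsOrthoAdditive

theorem LS_property_domain_subspace_general {m : Submodule 𝕜 E → ℝ≥0∞} (hm : IsOrthoAdditive m)
    (hLS : ∃ Q : Submodule 𝕜 E, 1 < Module.finrank 𝕜 Q ∧ m Q < ∞) :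
    ∃ S : Submodule 𝕜 E, (S : Set E) = {x : E | x ≠ 0 ∧ m (𝕜 ∙ x) < ∞} ∪ {0} := by
  obtain ⟨Q, hQ, hmQ⟩ := hLS
  have : FiniteDimensional 𝕜 Q := Module.finite_of_finrank_pos (by lia)
  have hQD : (Q : Set E) ⊆ {x : E | m (𝕜 ∙ x) < ∞} := fun x hx =>
    (hm.mono ((Submodule.span_singleton_le_iff_mem x Q).2 hx)).trans_lt hmQ
  obtain ⟨S, hS⟩ := hm.isOrthoClosed_setOf_lt_top.exists_submodule_coe_eq hQ hQD
  refine ⟨S, ?_⟩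
  ext x
  obtain rfl | hx := eq_or_ne x 0
  · simp
  · simp [hS, hx]

end Measure

/-- If a finitely additive measure `m` on the closed subspaces of a complex Hilbert
space `H` with `dim H ≥ 3` has the L-S property (some two-dimensional subspace has
finite measure), then `D(m) = {x ≠ 0 : m(span{x}) < ∞} ∪ {0}` is a linear subspace
of `H`. -/
theorem LS_property_domain_subspace {H : Type} [NormedAddCommGroup H]
    [InnerProductSpace ℂ H] [CompleteSpace H]
    (hdim : 3 ≤ Module.rank ℂ H)
    (m : Submodule ℂ H → ℝ≥0∞)
    (h0 : m ⊥ = 0)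
    (hadd : ∀ M N : Submodule ℂ H, IsClosed ((M : Set H)) → IsClosed ((N : Set H)) →
      (∀ u ∈ M, ∀ v ∈ N, ⟪u, v⟫_ℂ = 0) → m (M ⊔ N) = m M + m N)
    (hLS : ∃ Q : Submodule ℂ H, Module.finrank ℂ Q = 2 ∧ m Q < ∞) :
    ∃ S : Submodule ℂ H,
      (S : Set H) = {x : H | x ≠ 0 ∧ m (Submodule.span ℂ {x}) < ∞} ∪ {0} := by
  obtain ⟨Q, hQ, hmQ⟩ := hLS
  exact LS_property_domain_subspace_general (fun M N _ _ hMN =>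
    hadd M N M.closed_of_finiteDimensional N.closed_of_finiteDimensional
      (Submodule.isOrtho_iff_inner_eq.1 hMN)) ⟨Q, by lia, hmQ⟩
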